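/- arXiv:2310.03527 — 3 statements merged into one kernel-verified Lean document; each statement's English description precedes it below -/
import Mathlib

section
/- Let (X, Y) ∈ {0,1}² be random with X and Y independent, X Bernoulli of parameter a/(1+a) (an arrow entering from the bottom) and Y Bernoulli of parameter 1/(1+b) (an arrow entering from the left). Then the output (T, R) ∈ {0,1}² obtained by applying the stochastic six vertex weight with column rapidity a and row rapidity b to the input (X, Y) satisfies: T and R are independent, T is Bernoulli of parameter a/(1+a), and R is Bernoulli of parameter 1/(1+b). (The one-vertex stationarity lemma of Section 5.4 of the paper.) -/
/-- Bernoulli weight: probability `p` of value `true` and `1 - p` of value `false`. -/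
def bern (p : ℝ) : Bool → ℝ := fun x => if x then p else 1 - p

/-- The stochastic six vertex weight with column rapidity `a`, row rapidity `b` and
anisotropy parameter `t`: the probability of the output pair `(top, right)` given the
input pair `(bottom, left)`, where `p = (1 - ab)/(1 - tab)`. -/
noncomputable def sixVertexKernel (t a b : ℝ) : Bool × Bool → Bool × Bool → ℝ :=
  fun inp out =>
    match inp, out with
    | (false, false), (false, false) => 1
    | (true,  true ), (true,  true ) => 1
    | (true,  false), (true,  false) => t * ((1 - a * b) / (1 - t * a * b))
    | (true,  false), (false, true ) => 1 - t * ((1 - a * b) / (1 - t * a * b))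
    | (false, true ), (false, true ) => (1 - a * b) / (1 - t * a * b)
    | (false, true ), (true,  false) => 1 - (1 - a * b) / (1 - t * a * b)
    | _, _ => 0

/-- if the bottom input `X` is Bernoulli(`a/(1+a)`) and the left input `Y`
is Bernoulli(`1/(1+b)`), independently, then the output `(T, R)` of the stochastic six
vertex weight has `T` and `R` independent, with `T` Bernoulli(`a/(1+a)`) and `R`
Bernoulli(`1/(1+b)`): the joint output distribution is the corresponding product. -/
theorem stmt_5 (t a b : ℝ) (ht0 : 0 ≤ t) (ht1 : t < 1)
    (ha : a ∈ Set.Ioo (0 : ℝ) 1) (hb : b ∈ Set.Ioo (0 : ℝ) 1) :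
    ∀ T R : Bool,
      (∑ x : Bool, ∑ y : Bool,
        bern (a / (1 + a)) x * bern (1 / (1 + b)) y * sixVertexKernel t a b (x, y) (T, R)) =
      bern (a / (1 + a)) T * bern (1 / (1 + b)) R := by
  obtain ⟨ha0, ha1⟩ := ha
  obtain ⟨hb0, hb1⟩ := hb
  have hab : a * b < 1 := by nlinarith
  have hden : 1 - t * a * b ≠ 0 := by
    have : 0 < a * b := mul_pos ha0 hb0
    nlinarith
  have hp : (1 - a * b) / (1 - t * a * b) * (1 - t * a * b) = 1 - a * b := div_mul_cancel₀ _ hden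
  have ha' : 1 + a ≠ 0 := by positivity
  have hb' : 1 + b ≠ 0 := by positivity
  rintro (_ | _) (_ | _) <;>
    simp only [Fintype.sum_bool, bern, sixVertexKernel, if_true, if_false, Bool.false_eq_true] <;>
    generalize (1 - a * b) / (1 - t * a * b) = p at hp ⊢ <;>
    field_simp <;> grind
end

section
/- Fix M ≥ 1, real parameters t ∈ [0,1), column rapidities a_1,…,a_M ∈ (0,1), and a row rapidity b ∈ (0,1). Consider a single row of M stochastic six vertex weights in which vertex i has column rapidity a_i and row rapidity b, the right output of vertex i is the left input of vertex i+1, H_0 denotes the left input of vertex 1, H_M the right output of vertex M, and T_1,…,T_M the top outputs. If the bottom inputs B_1,…,B_M together with H_0 are jointly independent, with B_i Bernoulli of parameter a_i/(1+a_i) and H_0 Bernoulli of parameter 1/(1+b), then the outputs T_1,…,T_M, H_M are jointly independent, with T_i Bernoulli of parameter a_i/(1+a_i) and H_M Bernoulli of parameter 1/(1+b). (The Bernoulli propagation claim of Section 5.4, used to identify the stationary distributions of the periodic six vertex model.) -/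
/-- The product of Bernoulli weights is preserved by a single stochastic six vertex weight. -/
theorem sum_bern_mul_sixVertexKernel {t a b : ℝ} (ht : t * a * b ≠ 1) (ha : 1 + a ≠ 0)
    (hb : 1 + b ≠ 0) (x y : Bool) :
    ∑ u : Bool, ∑ v : Bool, bern (a / (1 + a)) u * bern (1 / (1 + b)) v *
      sixVertexKernel t a b (u, v) (x, y) = bern (a / (1 + a)) x * bern (1 / (1 + b)) y := by
  have h : 1 - t * a * b ≠ 0 := sub_ne_zero.mpr ht.symm
  have hp : (1 - a * b) / (1 - t * a * b) * (1 - t * a * b) = 1 - a * b := div_mul_cancel₀ _ h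
  cases x <;> cases y <;> simp only [bern, sixVertexKernel, Fintype.sum_bool] <;>
    generalize (1 - a * b) / (1 - t * a * b) = p at hp ⊢ <;> simp <;> field_simp
  · linear_combination hp
  · linear_combination -hp

/-- Summation over Boolean strings of length `n + 1` splits off the first letter. -/
theorem sum_bool_cons {n : ℕ} (f : (Fin (n + 1) → Bool) → ℝ) :
    ∑ g, f g = ∑ x : Bool, ∑ g : Fin n → Bool, f (Fin.cons x g) := by
  rw [← (Fin.consEquiv fun _ : Fin (n + 1) => Bool).sum_comp, Fintype.sum_prod_type]
  rfl

/-- Bernoulli propagation through a row of arbitrary (possibly zero) length, under the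
nondegeneracy conditions that make the weights well defined. -/
theorem sum_row_bern_mul_sixVertexKernel {t b : ℝ} (hb : 1 + b ≠ 0) (η : Bool) :
    ∀ (M : ℕ) (a : Fin M → ℝ) (_ : ∀ i, t * a i * b ≠ 1) (_ : ∀ i, 1 + a i ≠ 0)
      (τ : Fin M → Bool),
      (∑ B : Fin M → Bool, ∑ g : Fin (M + 1) → Bool,
        (if g (Fin.last M) = η then (1 : ℝ) else 0) *
          ((∏ i, bern (a i / (1 + a i)) (B i)) * bern (1 / (1 + b)) (g 0)) *
          ∏ i : Fin M, sixVertexKernel t (a i) b (B i, g i.castSucc) (τ i, g i.succ)) =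
      (∏ i, bern (a i / (1 + a i)) (τ i)) * bern (1 / (1 + b)) η
  | 0, a, _, _, τ => by
    simp [sum_bool_cons]
  | M + 1, a, ht, ha, τ => by
    have ih := sum_row_bern_mul_sixVertexKernel hb η M (fun i => a i.succ)
      (fun i => ht i.succ) (fun i => ha i.succ) (fun i => τ i.succ)
    rw [Fin.prod_univ_succ, mul_assoc, ← ih, Finset.mul_sum, sum_bool_cons, Finset.sum_comm]
    refine Finset.sum_congr rfl fun B _ => ?_
    simp_rw [sum_bool_cons (n := M + 1)]
    rw [Finset.mul_sum]
    simp_rw [Finset.sum_comm (s := (Finset.univ : Finset Bool))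
      (t := (Finset.univ : Finset (Fin (M + 1) → Bool)))]
    refine Finset.sum_congr rfl fun g _ => ?_
    have hv := sum_bern_mul_sixVertexKernel (ht 0) (ha 0) hb (τ 0) (g 0)
    simp only [Fin.prod_univ_succ (n := M), Fin.cons_zero, Fin.cons_succ, Fin.castSucc_zero,
      ← Fin.succ_last, ← Fin.succ_castSucc]
    simp only [Fintype.sum_bool] at hv ⊢
    linear_combination (if g (Fin.last M) = η then (1 : ℝ) else 0) *
      (∏ i : Fin M, bern (a i.succ / (1 + a i.succ)) (B i)) *
      (∏ i : Fin M, sixVertexKernel t (a i.succ) b (B i, g i.castSucc) (τ i.succ, g i.succ)) * hv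

/-- Bernoulli propagation through a row of `M` stochastic six vertex
weights.  Vertex `i` has column rapidity `a i` and row rapidity `b`; the horizontal
edges are `g 0` (the left boundary `H₀`), internal edges, and `g M` (the right output
`H_M`); `B i` is the bottom input and `τ i` the top output of vertex `i`.  If the
bottom inputs and `H₀` are jointly independent, with `B i` Bernoulli(`a i/(1+a i)`) and
`H₀` Bernoulli(`1/(1+b)`), then the joint distribution of the outputs `(τ, H_M)` is the
product of Bernoulli(`a i/(1+a i)`) for `τ i` and Bernoulli(`1/(1+b)`) for `H_M`. -/
theorem stmt_6 (M : ℕ) (hM : 1 ≤ M) (t : ℝ) (ht0 : 0 ≤ t) (ht1 : t < 1)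
    (a : Fin M → ℝ) (ha : ∀ i, a i ∈ Set.Ioo (0 : ℝ) 1)
    (b : ℝ) (hb : b ∈ Set.Ioo (0 : ℝ) 1)
    (τ : Fin M → Bool) (η : Bool) :
    (∑ B : Fin M → Bool, ∑ g : Fin (M + 1) → Bool,
      (if g (Fin.last M) = η then (1 : ℝ) else 0) *
        ((∏ i, bern (a i / (1 + a i)) (B i)) * bern (1 / (1 + b)) (g 0)) *
        ∏ i : Fin M, sixVertexKernel t (a i) b (B i, g i.castSucc) (τ i, g i.succ)) =
    (∏ i, bern (a i / (1 + a i)) (τ i)) * bern (1 / (1 + b)) η := by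
  refine sum_row_bern_mul_sixVertexKernel (by linarith [hb.1]) η M a (fun i => ?_)
    (fun i => by linarith [(ha i).1]) τ
  have hab : a i * b < 1 := mul_lt_one_of_nonneg_of_lt_one_left (ha i).1.le (ha i).2 hb.2.le
  have hpos : 0 < a i * b := mul_pos (ha i).1 hb.1
  nlinarith
end

section
/- Let S be a finite nonempty set and for each u ∈ (0,1] let P(u) be a row-stochastic S×S real matrix. Assume: (i) u ↦ P(u) is entrywise continuous at u = 1 (from within (0,1]); (ii) there exist constants C > 0 and c > 0 such that ‖μ·P(1)^n − ν·P(1)^n‖₁ ≤ C·e^{−c·n} for all probability row-vectors μ, ν and all n ∈ ℕ; (iii) for every u ∈ (0,1) the limit Q(u) := lim_{L→∞} P(u^{L−1})·P(u^{L−2})⋯P(u)·P(u^0) exists entrywise. Then the limit Π := lim_{n→∞} P(1)^n exists entrywise, and Q(u) converges entrywise to Π as u → 1⁻. (This is Proposition 5.4 of the paper, the convergence of the quasi-periodic six vertex model to the stationary periodic six vertex model, stated in its abstract Markov-matrix form, equation (matrix limits).) -/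
open Filter

/-- A row-stochastic matrix averages the columns of `D`, so it preserves entrywise bounds. -/
theorem abs_rowStochastic_mul_apply_le {S : Type*} [Fintype S] [DecidableEq S]
    {A D : Matrix S S ℝ} (hA : A ∈ Matrix.rowStochastic ℝ S) {ε : ℝ} {j : S}
    (hD : ∀ k, |D k j| ≤ ε) (i : S) : |(A * D) i j| ≤ ε := by
  have hA0 (k : S) : 0 ≤ A i k := Matrix.nonneg_of_mem_rowStochastic hA
  calc |(A * D) i j| ≤ ∑ k, |A i k * D k j| := by
        rw [Matrix.mul_apply]; exact Finset.abs_sum_le_sum_abs _ _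
    _ ≤ ∑ k, A i k * ε := by
        refine Finset.sum_le_sum fun k _ => ?_
        rw [abs_mul, abs_of_nonneg (hA0 k)]
        exact mul_le_mul_of_nonneg_left (hD k) (hA0 k)
    _ = ε := by
        rw [← Finset.sum_mul, Matrix.sum_row_of_mem_rowStochastic hA, one_mul]

/-- Splitting the first `n` factors off the right end of a descending product. -/
theorem prod_map_reverse_range_add {M : Type*} [Monoid M] (f : ℕ → M) (n m : ℕ) :
    ((List.range (n + m)).reverse.map f).prod =
      ((List.range m).reverse.map fun i => f (n + i)).prod *
        ((List.range n).reverse.map f).prod := by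
  simp [List.range_add, List.map_reverse, Function.comp_def]

/-- The descending product of `n` factors `P (u ^ i)` tends to `P 1 ^ n` as `u → 1⁻`. -/
theorem tendsto_prod_map_reverse_range {M : Type*} [Monoid M] [TopologicalSpace M]
    [ContinuousMul M] {P : ℝ → M} (hP : ContinuousWithinAt P (Set.Ioc (0 : ℝ) 1) 1) (n : ℕ) :
    Tendsto (fun u : ℝ => ((List.range n).reverse.map fun i => P (u ^ i)).prod)
      (nhdsWithin 1 (Set.Ioo (0 : ℝ) 1)) (nhds (P 1 ^ n)) := by
  induction n with
  | zero => simpa using tendsto_const_nhds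
  | succ n ih =>
    have hpow : Tendsto (fun u : ℝ => u ^ n) (nhdsWithin 1 (Set.Ioo (0 : ℝ) 1))
        (nhdsWithin 1 (Set.Ioc (0 : ℝ) 1)) := by
      refine tendsto_nhdsWithin_iff.2 ⟨?_, ?_⟩
      · have h : Tendsto (fun u : ℝ => u ^ n) (nhds 1) (nhds (1 ^ n)) :=
          (continuous_pow n).tendsto 1
        rw [one_pow] at h
        exact h.mono_left nhdsWithin_le_nhds
      · filter_upwards [self_mem_nhdsWithin] with u hu
        exact ⟨pow_pos hu.1 n, pow_le_one₀ hu.1.le hu.2.le⟩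
    rw [pow_succ']
    simpa [List.range_succ] using (hP.tendsto.comp hpow).mul ih

/-- Let `S` be a finite nonempty set and, for each `u ∈ (0,1]`, let `P u`
be a row-stochastic `S×S` matrix.  Assume (i) entrywise continuity of `u ↦ P u` at
`u = 1` from within `(0,1]`; (ii) uniform exponential mixing for `P 1`:
`‖μ·(P 1)^n − ν·(P 1)^n‖₁ ≤ C·e^{−c·n}` for all probability row-vectors `μ, ν`;
(iii) for every `u ∈ (0,1)` the ordered product `P(u^{L−1})·P(u^{L−2})⋯P(u^0)`
converges entrywise to some matrix `Q u` as `L → ∞`.  Then `Π := lim_{n→∞} (P 1)^n`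
exists and `Q u → Π` entrywise as `u → 1⁻`. -/
theorem stmt_7 {S : Type*} [Fintype S] [Nonempty S] [DecidableEq S]
    (P : ℝ → Matrix S S ℝ)
    (hnn : ∀ u ∈ Set.Ioc (0 : ℝ) 1, ∀ i j, 0 ≤ P u i j)
    (hrow : ∀ u ∈ Set.Ioc (0 : ℝ) 1, ∀ i, ∑ j, P u i j = 1)
    (hcont : ∀ i j, ContinuousWithinAt (fun u => P u i j) (Set.Ioc (0 : ℝ) 1) 1)
    (C c : ℝ) (hC : 0 < C) (hc : 0 < c)
    (hmix : ∀ μ ν : S → ℝ, (∀ i, 0 ≤ μ i) → ∑ i, μ i = 1 →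
      (∀ i, 0 ≤ ν i) → ∑ i, ν i = 1 → ∀ n : ℕ,
      ∑ j, |Matrix.vecMul μ ((P 1) ^ n) j - Matrix.vecMul ν ((P 1) ^ n) j| ≤
        C * Real.exp (-c * n))
    (Q : ℝ → Matrix S S ℝ)
    (hQ : ∀ u ∈ Set.Ioo (0 : ℝ) 1,
      Tendsto (fun L => ((List.range L).reverse.map fun i => P (u ^ i)).prod)
        atTop (nhds (Q u))) :
    ∃ Pi : Matrix S S ℝ,
      Tendsto (fun n => (P 1) ^ n) atTop (nhds Pi) ∧
      Tendsto Q (nhdsWithin 1 (Set.Ioo (0 : ℝ) 1)) (nhds Pi) := by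
  have hst : ∀ u ∈ Set.Ioc (0 : ℝ) 1, P u ∈ Matrix.rowStochastic ℝ S := fun u hu =>
    Matrix.mem_rowStochastic_iff_sum.2 ⟨hnn u hu, hrow u hu⟩
  have hP1 : P 1 ∈ Matrix.rowStochastic ℝ S := hst 1 ⟨one_pos, le_rfl⟩
  have hmix' : ∀ A ∈ Matrix.rowStochastic ℝ S, ∀ (n : ℕ) (i j : S),
      |(A * P 1 ^ n) i j - (P 1 ^ n) i j| ≤ C * Real.exp (-c * n) := by
    intro A hA n i j
    have hone := Submonoid.one_mem (Matrix.rowStochastic ℝ S)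
    have h := hmix (A i) ((1 : Matrix S S ℝ) i)
      (fun _ => Matrix.nonneg_of_mem_rowStochastic hA)
      (Matrix.sum_row_of_mem_rowStochastic hA i)
      (fun _ => Matrix.nonneg_of_mem_rowStochastic hone)
      (Matrix.sum_row_of_mem_rowStochastic hone i) n
    simp only [← Matrix.mul_apply_eq_vecMul, one_mul] at h
    exact (Finset.single_le_sum
      (f := fun j => |(A * P 1 ^ n) i j - (P 1 ^ n) i j|)
      (fun _ _ => abs_nonneg _) (Finset.mem_univ j)).trans h
  have hdecay : Tendsto (fun n : ℕ => C * Real.exp (-c * n)) atTop (nhds 0) := by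
    have h : Tendsto (fun n : ℕ => -c * (n : ℝ)) atTop atBot :=
      tendsto_natCast_atTop_atTop.const_mul_atTop_of_neg (neg_lt_zero.2 hc)
    simpa using (Real.tendsto_exp_atBot.comp h).const_mul C
  have hlim : ∀ i j, ∃ x, Tendsto (fun n : ℕ => (P 1 ^ n) i j) atTop (nhds x) := by
    intro i j
    refine cauchySeq_tendsto_of_complete (cauchySeq_of_le_tendsto_0'
      (fun n : ℕ => C * Real.exp (-c * n)) (fun n m hnm => ?_) hdecay)
    obtain ⟨k, rfl⟩ := Nat.exists_eq_add_of_le' hnm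
    rw [dist_comm, Real.dist_eq, pow_add]
    exact hmix' _ (Submonoid.pow_mem _ hP1 k) n i j
  choose Pi hPi using hlim
  have hPi' : Tendsto (fun n => P 1 ^ n) atTop (nhds (Matrix.of Pi)) :=
    tendsto_pi_nhds.2 fun i => tendsto_pi_nhds.2 fun j => hPi i j
  have hfix : ∀ A ∈ Matrix.rowStochastic ℝ S, A * Matrix.of Pi = Matrix.of Pi := by
    intro A hA
    have hzero : Tendsto (fun n => A * P 1 ^ n - P 1 ^ n) atTop (nhds 0) :=
      tendsto_pi_nhds.2 fun i => tendsto_pi_nhds.2 fun j =>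
        squeeze_zero_norm (fun n => hmix' A hA n i j) hdecay
    exact sub_eq_zero.1 (tendsto_nhds_unique ((hPi'.const_mul A).sub hPi') hzero)
  refine ⟨Matrix.of Pi, hPi', tendsto_pi_nhds.2 fun i => tendsto_pi_nhds.2 fun j => ?_⟩
  have hP : ContinuousWithinAt P (Set.Ioc (0 : ℝ) 1) 1 :=
    continuousWithinAt_pi.2 fun i => continuousWithinAt_pi.2 fun j => hcont i j
  rw [Metric.tendsto_nhds]
  intro ε hε
  have hclose : ∀ᶠ n in atTop, ∀ k, |(P 1 ^ n) k j - Pi k j| < ε / 2 :=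
    eventually_all.2 fun k => Metric.tendsto_nhds.1 (hPi k j) _ (half_pos hε)
  obtain ⟨n, hn⟩ := hclose.exists
  have hB := tendsto_prod_map_reverse_range hP n
  have hBclose : ∀ᶠ u in nhdsWithin 1 (Set.Ioo (0 : ℝ) 1), ∀ k,
      |((List.range n).reverse.map fun i => P (u ^ i)).prod k j - Pi k j| < ε / 2 :=
    eventually_all.2 fun k =>
      ((((tendsto_pi_nhds.1 (tendsto_pi_nhds.1 hB k) j).sub_const (Pi k j)).abs).eventually_lt_const
        (hn k))
  filter_upwards [hBclose, self_mem_nhdsWithin] with u hu hu01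
  have hQij := ((tendsto_pi_nhds.1 (tendsto_pi_nhds.1 (hQ u hu01) i) j).sub_const (Pi i j)).abs
  refine lt_of_le_of_lt (le_of_tendsto hQij ?_) (half_lt_self hε)
  filter_upwards [eventually_ge_atTop n] with L hL
  obtain ⟨m, rfl⟩ := Nat.exists_eq_add_of_le hL
  rw [prod_map_reverse_range_add (fun i => P (u ^ i))]
  have hA : ((List.range m).reverse.map fun i => P (u ^ (n + i))).prod ∈
      Matrix.rowStochastic ℝ S := by
    refine Submonoid.list_prod_mem _ fun M hM => ?_
    obtain ⟨k, -, rfl⟩ := List.mem_map.1 hM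
    exact hst _ ⟨pow_pos hu01.1 _, pow_le_one₀ hu01.1.le hu01.2.le⟩
  have h := abs_rowStochastic_mul_apply_le hA
    (D := ((List.range n).reverse.map fun i => P (u ^ i)).prod - Matrix.of Pi)
    (fun k => (hu k).le) i
  rwa [mul_sub, hfix _ hA] at h
end
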